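/- Let G be a non-complete simple graph achieving its toughness at a set S with c(G−S) = 2. Then t(G) ≥ μ_2/(μ_n − δ), where μ_2 and μ_n are the second smallest and largest Laplacian eigenvalues and δ the minimum degree. -/

import Mathlib

open SimpleGraph Matrix

/-- The (unordered) eigenvalues of the Laplacian matrix `L = D - A` of `G`. -/
noncomputable def lapEigs {V : Type*} [Fintype V] [DecidableEq V]
    (G : SimpleGraph V) [DecidableRel G.Adj] : V → ℝ :=
  (SimpleGraph.posSemidef_lapMatrix ℝ G).1.eigenvalues

/-- `μ : Fin n → ℝ` is the nondecreasing list of the Laplacian eigenvalues of `G`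
(so `μ 0 = μ_1 ≤ μ 1 = μ_2 ≤ … ≤ μ (n-1) = μ_n`). -/
def IsLapSpectrum {V : Type*} [Fintype V] [DecidableEq V]
    (G : SimpleGraph V) [DecidableRel G.Adj] {n : ℕ} (μ : Fin n → ℝ) : Prop :=
  Monotone μ ∧ ∃ σ : Fin n ≃ V, ∀ i, μ i = lapEigs G (σ i)

/-- The number of connected components of `G - S`. -/
noncomputable def numComp {V : Type*} (G : SimpleGraph V) (S : Finset V) : ℕ :=
  Nat.card (G.induce ((↑S : Set V)ᶜ)).ConnectedComponent

/-!
Write `s = |S|`. Fiedler's inequality `μ₂ ≤ s` settles the case `μₙ - δ ≥ 2`. Otherwise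
`μₙ ≥ Δ + 1` forces `G` to be regular, of degree `d` say, and `N = A + 2`, with `A` the adjacency
matrix, is positive definite: it is the Gram matrix of an integral lattice generated by vectors of
squared norm 2. A connected regular graph that is not complete has an induced cycle of length at
least four. Positivity makes that length odd, so the Gram matrix of the cycle has determinant 4 and
the nonzero vectors of its dual lattice have squared norm at least 1. Adding the remaining vertices
one at a time, each adjacent to an earlier one, preserves this bound and does not increase the
determinant. Hence `det N ≤ 4`, while `d + 2` divides `det N` as the rows of `N` sum to `d + 2`.
So `d ≤ 2`, `G` is an odd cycle of length at least five, `s ≥ 2`, and test vectors on an induced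
path with four vertices give `μ₂ ≤ μₙ - δ`.
-/

section HermitianMatrix

variable {V : Type*} [Fintype V] [DecidableEq V] {A : Matrix V V ℝ}

theorem sum_eigenvectorBasis_dotProduct_mul (hA : A.IsHermitian) (f g : V → ℝ) :
    ∑ i, (hA.eigenvectorBasis i ⬝ᵥ f) * (hA.eigenvectorBasis i ⬝ᵥ g) = f ⬝ᵥ g := by
  have parseval := hA.eigenvectorBasis.sum_inner_mul_inner (WithLp.toLp 2 f) (WithLp.toLp 2 g)
  simp only [EuclideanSpace.inner_eq_star_dotProduct, star_trivial] at parseval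
  simpa only [dotProduct_comm g] using parseval

theorem eigenvectorBasis_dotProduct_mulVec (hA : A.IsHermitian) (f : V → ℝ) (i : V) :
    hA.eigenvectorBasis i ⬝ᵥ A *ᵥ f = hA.eigenvalues i * (hA.eigenvectorBasis i ⬝ᵥ f) := by
  rw [dotProduct_mulVec, ← mulVec_transpose, ← conjTranspose_eq_transpose_of_trivial, hA.eq,
    hA.mulVec_eigenvectorBasis, smul_dotProduct, smul_eq_mul]

theorem dotProduct_mulVec_eq_sum_eigenvalues (hA : A.IsHermitian) (f : V → ℝ) :
    f ⬝ᵥ A *ᵥ f = ∑ i, hA.eigenvalues i * (hA.eigenvectorBasis i ⬝ᵥ f) ^ 2 := by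
  rw [← sum_eigenvectorBasis_dotProduct_mul hA]
  exact Finset.sum_congr rfl fun i _ ↦ by rw [eigenvectorBasis_dotProduct_mulVec]; ring

theorem dotProduct_mulVec_le_of_eigenvalues_le (hA : A.IsHermitian) {M : ℝ}
    (hM : ∀ i, hA.eigenvalues i ≤ M) (f : V → ℝ) : f ⬝ᵥ A *ᵥ f ≤ M * (f ⬝ᵥ f) := by
  rw [dotProduct_mulVec_eq_sum_eigenvalues hA, ← sum_eigenvectorBasis_dotProduct_mul hA,
    Finset.mul_sum]
  simp only [← sq]
  gcongr with i
  exact hM i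

theorem mulVec_dotProduct_mulVec_le_of_eigenvalues_le (hA : A.PosSemidef) {M : ℝ}
    (hM : ∀ i, hA.isHermitian.eigenvalues i ≤ M) (f : V → ℝ) :
    (A *ᵥ f) ⬝ᵥ (A *ᵥ f) ≤ M * (f ⬝ᵥ A *ᵥ f) := by
  rw [dotProduct_mulVec_eq_sum_eigenvalues hA.isHermitian,
    ← sum_eigenvectorBasis_dotProduct_mul hA.isHermitian, Finset.mul_sum]
  simp only [eigenvectorBasis_dotProduct_mulVec]
  refine Finset.sum_le_sum fun i _ ↦ ?_
  have := mul_le_mul_of_nonneg_right (hM i) (mul_nonneg (hA.eigenvalues_nonneg i)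
    (sq_nonneg (hA.isHermitian.eigenvectorBasis i ⬝ᵥ f)))
  linarith

theorem eigenvectorBasis_dotProduct_eq_zero (hA : A.IsHermitian) {w : V → ℝ} {c : ℝ}
    (hw : A *ᵥ w = c • w) {i : V} (hi : hA.eigenvalues i ≠ c) :
    hA.eigenvectorBasis i ⬝ᵥ w = 0 := by
  have := eigenvectorBasis_dotProduct_mulVec hA w i
  rw [hw, dotProduct_smul, smul_eq_mul] at this
  exact (mul_eq_mul_right_iff.mp this).resolve_left hi.symm

theorem mul_dotProduct_le_of_le_eigenvalues_of_ne (hA : A.IsHermitian) {m : ℝ} {i₀ : V}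
    (hm : ∀ i ≠ i₀, m ≤ hA.eigenvalues i) {w : V → ℝ} {c : ℝ} (hw₀ : w ≠ 0)
    (hw : A *ᵥ w = c • w) (hc : c < m) {f : V → ℝ} (hf : w ⬝ᵥ f = 0) :
    m * (f ⬝ᵥ f) ≤ f ⬝ᵥ A *ᵥ f := by
  have w_orth : ∀ i ≠ i₀, hA.eigenvectorBasis i ⬝ᵥ w = 0 := fun i hi ↦
    eigenvectorBasis_dotProduct_eq_zero hA hw (hc.trans_le (hm i hi)).ne'
  have expand_w (g : V → ℝ) :
      (hA.eigenvectorBasis i₀ ⬝ᵥ w) * (hA.eigenvectorBasis i₀ ⬝ᵥ g) = w ⬝ᵥ g := by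
    rw [← sum_eigenvectorBasis_dotProduct_mul hA w g, Fintype.sum_eq_single i₀]
    intro i hi
    rw [w_orth i hi, zero_mul]
  have w_coord_ne : hA.eigenvectorBasis i₀ ⬝ᵥ w ≠ 0 := fun h ↦
    hw₀ (dotProduct_self_eq_zero.mp (by rw [← expand_w w, h, zero_mul]))
  have f_coord_eq : hA.eigenvectorBasis i₀ ⬝ᵥ f = 0 :=
    (mul_eq_zero.mp ((expand_w f).trans hf)).resolve_left w_coord_ne
  rw [dotProduct_mulVec_eq_sum_eigenvalues hA, ← sum_eigenvectorBasis_dotProduct_mul hA,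
    Finset.mul_sum]
  refine Finset.sum_le_sum fun i _ ↦ ?_
  rw [← sq]
  rcases eq_or_ne i i₀ with rfl | hi
  · rw [f_coord_eq]; simp
  · exact mul_le_mul_of_nonneg_right (hm i hi) (sq_nonneg _)

end HermitianMatrix

namespace IsLapSpectrum

variable {V : Type*} [Fintype V] [DecidableEq V] {G : SimpleGraph V} [DecidableRel G.Adj]
  {n : ℕ} {μ : Fin n → ℝ}

theorem nonneg (hμ : IsLapSpectrum G μ) (i : Fin n) : 0 ≤ μ i := by
  obtain ⟨-, σ, hσ⟩ := hμ
  exact hσ i ▸ (posSemidef_lapMatrix ℝ G).eigenvalues_nonneg _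

theorem nontrivial (hμ : IsLapSpectrum G μ) (hn : 2 ≤ n) : Nontrivial V := by
  obtain ⟨-, σ, -⟩ := hμ
  have := Fin.nontrivial_iff_two_le.mpr hn
  exact σ.symm.nontrivial

theorem lapEigs_le_last (hμ : IsLapSpectrum G μ) (hn : 2 ≤ n) (v : V) :
    lapEigs G v ≤ μ ⟨n - 1, by omega⟩ := by
  obtain ⟨mono, σ, hσ⟩ := hμ
  rw [← σ.apply_symm_apply v, ← hσ]
  exact mono (Fin.mk_le_mk.mpr (by omega))

theorem exists_forall_ne_second_le (hμ : IsLapSpectrum G μ) (hn : 2 ≤ n) :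
    ∃ v₀, ∀ v ≠ v₀, μ ⟨1, by omega⟩ ≤ lapEigs G v := by
  obtain ⟨mono, σ, hσ⟩ := hμ
  refine ⟨σ ⟨0, by omega⟩, fun v hv ↦ ?_⟩
  have index_ne : (σ.symm v : ℕ) ≠ 0 := fun h ↦ hv (by simp [← h])
  rw [← σ.apply_symm_apply v, ← hσ]
  exact mono (Fin.le_iff_val_le_val.mpr (Nat.one_le_iff_ne_zero.mpr index_ne))

theorem dotProduct_lapMatrix_mulVec_le (hμ : IsLapSpectrum G μ) (hn : 2 ≤ n) (f : V → ℝ) :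
    f ⬝ᵥ G.lapMatrix ℝ *ᵥ f ≤ μ ⟨n - 1, by omega⟩ * (f ⬝ᵥ f) :=
  dotProduct_mulVec_le_of_eigenvalues_le _ (hμ.lapEigs_le_last hn) f

theorem mul_dotProduct_le (hμ : IsLapSpectrum G μ) (hn : 2 ≤ n) {f : V → ℝ}
    (hf : ∑ v, f v = 0) : μ ⟨1, by omega⟩ * (f ⬝ᵥ f) ≤ f ⬝ᵥ G.lapMatrix ℝ *ᵥ f := by
  obtain ⟨v₀, hv₀⟩ := hμ.exists_forall_ne_second_le hn
  rcases le_or_gt (μ ⟨1, by omega⟩) 0 with nonpos | pos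
  · have norm_nonneg : 0 ≤ f ⬝ᵥ f := by simpa using dotProduct_star_self_nonneg f
    exact (mul_nonpos_of_nonpos_of_nonneg nonpos norm_nonneg).trans
      ((posSemidef_lapMatrix ℝ G).dotProduct_mulVec_nonneg f)
  · refine mul_dotProduct_le_of_le_eigenvalues_of_ne (w := fun _ ↦ 1) _ hv₀
      (fun h ↦ one_ne_zero (congrFun h v₀)) ?_ pos ?_
    · rw [lapMatrix_mulVec_const_eq_zero, zero_smul]
    · simpa [dotProduct] using hf

theorem degree_add_one_le_last (hμ : IsLapSpectrum G μ) (hn : 2 ≤ n) {v : V}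
    (hv : 0 < G.degree v) : (G.degree v : ℝ) + 1 ≤ μ ⟨n - 1, by omega⟩ := by
  have column_sq (u : V) : G.lapMatrix ℝ u v ^ 2 =
      (if u = v then (G.degree v : ℝ) ^ 2 else 0) + if G.Adj v u then 1 else 0 := by
    rcases eq_or_ne u v with rfl | huv
    · simp [lapMatrix, degMatrix]
    · simp [lapMatrix, degMatrix, huv, adj_comm G u v]
  have sum_column_sq : ∑ u, G.lapMatrix ℝ u v ^ 2 = (G.degree v : ℝ) ^ 2 + G.degree v := by
    simp [column_sq, Finset.sum_add_distrib, G.degree_eq_sum_if_adj (R := ℝ)]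
  have diagonal_entry : G.lapMatrix ℝ v v = G.degree v := by simp [lapMatrix, degMatrix]
  have key := mulVec_dotProduct_mulVec_le_of_eigenvalues_le (posSemidef_lapMatrix ℝ G)
    (hμ.lapEigs_le_last hn) (Pi.single v 1)
  rw [mulVec_single_one, single_one_dotProduct, col_apply, diagonal_entry] at key
  simp only [dotProduct, col_apply, ← sq, sum_column_sq] at key
  have degree_pos : (0 : ℝ) < G.degree v := by exact_mod_cast hv
  nlinarith

end IsLapSpectrum

section Separation

variable {V : Type*} {G : SimpleGraph V} {S : Finset V} {A : Set V}

/-- `S` separates `A` from a nonempty rest of the graph: `A` is a nonempty union of connected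
components of `G - S` that does not contain every vertex of `G - S`. -/
structure Separates (G : SimpleGraph V) (S : Finset V) (A : Set V) : Prop where
  nonempty : A.Nonempty
  disjoint : Disjoint A (S : Set V)
  exists_notMem : ∃ v, v ∉ A ∧ v ∉ S
  mem_or_mem_of_adj : ∀ ⦃u v⦄, u ∈ A → G.Adj u v → v ∈ A ∨ v ∈ S

theorem Separates.ne_top (h : Separates G S A) : G ≠ ⊤ := by
  rintro rfl
  obtain ⟨u, hu⟩ := h.nonempty
  obtain ⟨v, hvA, hvS⟩ := h.exists_notMem
  have huv : u ≠ v := fun huv ↦ hvA (huv ▸ hu)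
  exact (h.mem_or_mem_of_adj hu ((top_adj u v).mpr huv)).elim hvA hvS

theorem Separates.mem_iff_of_adj (h : Separates G S A) {u v : V} (huv : G.Adj u v) (hu : u ∉ S)
    (hv : v ∉ S) : u ∈ A ↔ v ∈ A :=
  ⟨fun hA ↦ (h.mem_or_mem_of_adj hA huv).resolve_right hv,
    fun hA ↦ (h.mem_or_mem_of_adj hA huv.symm).resolve_right hu⟩

theorem exists_separates_of_not_preconnected (h : ¬(G.induce (S : Set V)ᶜ).Preconnected) :
    ∃ A, Separates G S A := by
  obtain ⟨x, y, hxy⟩ : ∃ x y, ¬(G.induce (S : Set V)ᶜ).Reachable x y := by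
    simpa only [Preconnected, not_forall] using h
  refine ⟨{v | ∃ hv : v ∈ (S : Set V)ᶜ, (G.induce (S : Set V)ᶜ).Reachable x ⟨v, hv⟩},
    ⟨x, x.2, .rfl⟩, Set.disjoint_left.mpr fun v ⟨hv, _⟩ ↦ hv, ⟨y, fun ⟨_, h⟩ ↦ hxy h, y.2⟩, ?_⟩
  rintro u v ⟨hu, hxu⟩ huv
  refine or_iff_not_imp_right.mpr fun hv ↦ ⟨hv, hxu.trans ?_⟩
  exact Adj.reachable (induce_adj.mpr huv)

theorem exists_separates_of_two_le_numComp (h : 2 ≤ numComp G S) :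
    ∃ A, Separates G S A := by
  refine exists_separates_of_not_preconnected fun hconn ↦ ?_
  have := hconn.subsingleton_connectedComponent
  have : numComp G S ≤ 1 := Finite.card_le_one_iff_subsingleton.mpr this
  omega

theorem exists_separates_empty_of_not_preconnected (h : ¬G.Preconnected) :
    ∃ A, Separates G ∅ A := by
  refine exists_separates_of_not_preconnected fun hconn ↦ h fun x y ↦ ?_
  exact (hconn ⟨x, by simp⟩ ⟨y, by simp⟩).map (Embedding.induce _).toHom

theorem Separates.exists_sum_eq_zero [Fintype V] (h : Separates G S A) :
    ∃ f : V → ℝ, f ≠ 0 ∧ ∑ v, f v = 0 ∧ (∀ v ∈ S, f v = 0) ∧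
      ∀ u v, u ∉ S → v ∉ S → G.Adj u v → f u = f v := by
  classical
  obtain ⟨w, hwA, hwS⟩ := h.exists_notMem
  let B : Finset V := {v | v ∉ A ∧ v ∉ S}
  refine ⟨fun v ↦ (if v ∈ A.toFinset then (B.card : ℝ) else 0) -
    if v ∈ B then (A.toFinset.card : ℝ) else 0, fun hf ↦ ?_, ?_, fun v hv ↦ ?_, ?_⟩
  · have := congrFun hf w
    simp [B, hwA, hwS, ← Set.eq_empty_iff_forall_notMem, h.nonempty.ne_empty] at this
  · simp only [Finset.sum_sub_distrib, Finset.sum_ite_mem, Finset.univ_inter, Finset.sum_const,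
      nsmul_eq_mul, mul_comm, sub_self]
  · have : v ∉ A := Set.disjoint_right.mp h.disjoint hv
    simp [B, hv, this]
  · intro u v hu hv huv
    simp [B, hu, hv, h.mem_iff_of_adj huv hu hv]

variable [Fintype V] [DecidableEq V] [DecidableRel G.Adj]

theorem dotProduct_lapMatrix_mulVec_le_card_mul {f : V → ℝ} (hS : ∀ v ∈ S, f v = 0)
    (hadj : ∀ u v, u ∉ S → v ∉ S → G.Adj u v → f u = f v) :
    f ⬝ᵥ G.lapMatrix ℝ *ᵥ f ≤ S.card * (f ⬝ᵥ f) := by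
  have edge_le (u v : V) : (if G.Adj u v then (f u - f v) ^ 2 else 0) ≤
      (if u ∈ S then f v ^ 2 else 0) + if v ∈ S then f u ^ 2 else 0 := by
    by_cases hu : u ∈ S <;> by_cases hv : v ∈ S <;> by_cases huv : G.Adj u v <;>
      simp only [hu, hv, huv, if_true, if_false] <;> try positivity
    · simp [hS u hu, hS v hv]
    · simp [hS u hu]
    · simp [hS v hv]
    · simp [hadj u v hu hv huv]
  have sum_bound : ∑ u, ∑ v, ((if u ∈ S then f v ^ 2 else 0) + if v ∈ S then f u ^ 2 else 0) =
      2 * (S.card * (f ⬝ᵥ f)) := by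
    simp [Finset.sum_add_distrib, Finset.sum_ite_irrel, dotProduct, ← sq, Finset.mul_sum, two_mul]
  have sum_le := Finset.sum_le_sum fun u (_ : u ∈ Finset.univ) ↦
    Finset.sum_le_sum fun v (_ : v ∈ Finset.univ) ↦ edge_le u v
  rw [← toLinearMap₂'_apply', lapMatrix_toLinearMap₂']
  linarith

theorem Separates.second_le_card (h : Separates G S A) {n : ℕ} {μ : Fin n → ℝ}
    (hμ : IsLapSpectrum G μ) (hn : 2 ≤ n) : μ ⟨1, by omega⟩ ≤ S.card := by
  obtain ⟨f, hf, sum_eq, zero_on, adj_eq⟩ := h.exists_sum_eq_zero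
  have norm_pos : 0 < f ⬝ᵥ f := by simpa using dotProduct_star_self_pos_iff.mpr hf
  exact le_of_mul_le_mul_right ((hμ.mul_dotProduct_le hn sum_eq).trans
    (dotProduct_lapMatrix_mulVec_le_card_mul zero_on adj_eq)) norm_pos

theorem IsLapSpectrum.preconnected {n : ℕ} {μ : Fin n → ℝ} (hμ : IsLapSpectrum G μ) (hn : 2 ≤ n)
    (pos : 0 < μ ⟨1, by omega⟩) : G.Preconnected := by
  by_contra hconn
  obtain ⟨A, hA⟩ := exists_separates_empty_of_not_preconnected hconn
  exact pos.not_ge (by simpa using hA.second_le_card hμ hn)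

end Separation

section Lattice

variable {ι : Type*}

/-- The Gram matrix obtained from the Gram matrix `A` of a lattice basis by adjoining a vector of
squared length `2` whose inner products with the basis vectors are given by `b`. -/
def borderTwo (A : Matrix ι ι ℝ) (b : ι → ℝ) : Matrix (ι ⊕ Unit) (ι ⊕ Unit) ℝ :=
  fromBlocks A (replicateCol Unit b) (replicateRow Unit b) 2

variable {A : Matrix ι ι ℝ} {b : ι → ℝ}

theorem posDef_of_borderTwo (h : (borderTwo A b).PosDef) : A.PosDef :=
  h.submatrix Sum.inl_injective

variable [Fintype ι]

/-- Every nonzero vector of the dual of the lattice with Gram matrix `A` has squared length at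
least `1`. Here `y` holds the coordinates of a vector in the lattice basis, so that it belongs to
the dual lattice when `A *ᵥ y` is integral. -/
def DualNormSqGeOne (A : Matrix ι ι ℝ) : Prop :=
  ∀ y : ι → ℝ, y ≠ 0 → (∀ i, ∃ k : ℤ, (A *ᵥ y) i = k) → 1 ≤ y ⬝ᵥ A *ᵥ y

theorem borderTwo_mulVec (y : ι ⊕ Unit → ℝ) :
    borderTwo A b *ᵥ y = Sum.elim (A *ᵥ (y ∘ Sum.inl) + y (Sum.inr ()) • b)
      fun _ ↦ b ⬝ᵥ (y ∘ Sum.inl) + 2 * y (Sum.inr ()) := by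
  rw [borderTwo, fromBlocks_mulVec]
  congr 1 <;> ext i <;> simp [mulVec, dotProduct, mul_comm]

theorem borderTwo_dotProduct_mulVec (hA : A.IsSymm) {p : ι → ℝ} (hp : A *ᵥ p = b)
    (y : ι ⊕ Unit → ℝ) :
    y ⬝ᵥ borderTwo A b *ᵥ y =
      (y ∘ Sum.inl + y (Sum.inr ()) • p) ⬝ᵥ A *ᵥ (y ∘ Sum.inl + y (Sum.inr ()) • p) +
        y (Sum.inr ()) ^ 2 * (2 - b ⬝ᵥ p) := by
  have swap : p ⬝ᵥ A *ᵥ (y ∘ Sum.inl) = b ⬝ᵥ (y ∘ Sum.inl) := by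
    rw [dotProduct_mulVec, ← mulVec_transpose, hA.eq, hp]
  have split : y ⬝ᵥ borderTwo A b *ᵥ y = (y ∘ Sum.inl) ⬝ᵥ (A *ᵥ (y ∘ Sum.inl) + y (Sum.inr ()) • b)
      + y (Sum.inr ()) * (b ⬝ᵥ (y ∘ Sum.inl) + 2 * y (Sum.inr ())) := by
    rw [borderTwo_mulVec]
    simp [dotProduct]
  rw [split]
  simp only [mulVec_add, mulVec_smul, hp, dotProduct_add, add_dotProduct, dotProduct_smul,
    smul_dotProduct, smul_eq_mul, swap, dotProduct_comm _ b]
  ring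

theorem det_borderTwo [DecidableEq ι] (hA : IsUnit A) {p : ι → ℝ} (hp : A *ᵥ p = b) :
    (borderTwo A b).det = A.det * (2 - b ⬝ᵥ p) := by
  have := hA.invertible
  have inv_mulVec : A⁻¹ *ᵥ b = p := by
    rw [← hp, mulVec_mulVec, nonsing_inv_mul A ((isUnit_iff_isUnit_det A).mp hA), one_mulVec]
  rw [borderTwo, det_fromBlocks₁₁, det_unique (_ - _), invOf_eq_nonsing_inv, Matrix.mul_assoc]
  congr 1
  simp [Matrix.mul_apply, ← inv_mulVec, mulVec, dotProduct, Matrix.ofNat_apply]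

theorem exists_mulVec_eq_of_posDef_borderTwo (hpos : (borderTwo A b).PosDef)
    (hA : DualNormSqGeOne A) (hb : ∀ i, ∃ k : ℤ, b i = k) (hb₀ : b ≠ 0) :
    ∃ p, A *ᵥ p = b ∧ 1 ≤ b ⬝ᵥ p ∧ b ⬝ᵥ p < 2 := by
  classical
  have A_pos := posDef_of_borderTwo hpos
  have hp : A *ᵥ (A⁻¹ *ᵥ b) = b := by
    rw [mulVec_mulVec, mul_nonsing_inv A A_pos.det_pos.ne'.isUnit, one_mulVec]
  refine ⟨A⁻¹ *ᵥ b, hp, ?_, ?_⟩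
  · have p_ne : A⁻¹ *ᵥ b ≠ 0 := fun h ↦ hb₀ (by rw [← hp, h, mulVec_zero])
    simpa only [hp, dotProduct_comm _ b] using hA _ p_ne (by simpa only [hp] using hb)
  · have det_pos := hpos.det_pos
    rw [det_borderTwo A_pos.isUnit hp] at det_pos
    linarith [pos_of_mul_pos_right det_pos A_pos.det_pos.le]

theorem det_borderTwo_le [DecidableEq ι] (hpos : (borderTwo A b).PosDef) (hA : DualNormSqGeOne A)
    (hb : ∀ i, ∃ k : ℤ, b i = k) (hb₀ : b ≠ 0) : (borderTwo A b).det ≤ A.det := by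
  have A_pos := posDef_of_borderTwo hpos
  obtain ⟨p, hp, one_le, -⟩ := exists_mulVec_eq_of_posDef_borderTwo hpos hA hb hb₀
  rw [det_borderTwo A_pos.isUnit hp]
  nlinarith [A_pos.det_pos]

theorem DualNormSqGeOne.borderTwo (hpos : (borderTwo A b).PosDef) (hA : DualNormSqGeOne A)
    (hb : ∀ i, ∃ k : ℤ, b i = k) (hb₀ : b ≠ 0) : DualNormSqGeOne (borderTwo A b) := by
  intro y hy hint
  have A_pos := posDef_of_borderTwo hpos
  obtain ⟨p, hp, one_le, lt_two⟩ := exists_mulVec_eq_of_posDef_borderTwo hpos hA hb hb₀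
  rw [borderTwo_dotProduct_mulVec (by simpa using A_pos.isHermitian) hp]
  rw [borderTwo_mulVec] at hint
  set t := y (Sum.inr ())
  have gap_pos : 0 < 2 - b ⬝ᵥ p := by linarith
  rcases eq_or_ne (y ∘ Sum.inl + t • p) 0 with proj_eq | proj_ne
  · have t_ne : t ≠ 0 := by
      intro ht
      rw [ht, zero_smul, add_zero] at proj_eq
      refine hy (funext ?_)
      rintro (i | _)
      exacts [congrFun proj_eq i, ht]
    obtain ⟨k, hk⟩ := hint (Sum.inr ())
    have k_eq : t * (2 - b ⬝ᵥ p) = k := by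
      rw [← hk, Sum.elim_inr, eq_neg_of_add_eq_zero_left proj_eq, dotProduct_neg, dotProduct_smul,
        smul_eq_mul]
      ring
    have one_le_k_sq : 1 ≤ (k : ℝ) ^ 2 := by
      have : k ≠ 0 := by
        rintro rfl
        simp [t_ne, gap_pos.ne'] at k_eq
      exact_mod_cast (one_le_sq_iff_one_le_abs k).mpr (Int.one_le_abs this)
    rw [← k_eq] at one_le_k_sq
    rw [proj_eq, zero_dotProduct]
    nlinarith [sq_nonneg t]
  · have := hA _ proj_ne fun i ↦ by
      simpa only [mulVec_add, mulVec_smul, hp, Sum.elim_inl] using hint (Sum.inl i)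
    nlinarith [sq_nonneg t]

end Lattice

section Growth

variable {V : Type*} {G : SimpleGraph V}

theorem exists_adj_notMem_range (hconn : G.Preconnected) {ι : Type*} [Nonempty ι] {f : ι → V}
    (hf : ¬Function.Surjective f) : ∃ i, ∃ v ∉ Set.range f, G.Adj (f i) v := by
  obtain ⟨w, hw⟩ : ∃ w, w ∉ Set.range f := by simpa [Function.Surjective] using hf
  obtain ⟨walk⟩ := hconn (f (Classical.arbitrary ι)) w
  obtain ⟨dart, -, ⟨i, hi⟩, hsnd⟩ := walk.exists_boundary_dart (Set.range f) ⟨_, rfl⟩ hw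
  exact ⟨i, dart.snd, hsnd, hi ▸ dart.adj⟩

variable [DecidableEq V] [DecidableRel G.Adj]

theorem submatrix_adjMatrix_add_two_eq_borderTwo {ι : Type*} (f : ι → V) {v : V}
    (hv : v ∉ Set.range f) :
    (G.adjMatrix ℝ + 2).submatrix (Sum.elim f fun _ : Unit ↦ v) (Sum.elim f fun _ : Unit ↦ v) =
      borderTwo ((G.adjMatrix ℝ + 2).submatrix f f) fun i ↦ G.adjMatrix ℝ (f i) v := by
  have ne_v (i : ι) : f i ≠ v := fun h ↦ hv ⟨i, h⟩
  ext (i | i) (j | j) <;>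
    simp [borderTwo, Matrix.ofNat_apply, ne_v, (ne_v _).symm, adj_comm G v]

variable [Fintype V]

theorem det_adjMatrix_add_two_le (hconn : G.Preconnected) (hpos : (G.adjMatrix ℝ + 2).PosDef)
    {ι : Type*} [Fintype ι] [DecidableEq ι] [Nonempty ι] (f : ι ↪ V)
    (hf : DualNormSqGeOne ((G.adjMatrix ℝ + 2).submatrix f f)) :
    (G.adjMatrix ℝ + 2).det ≤ ((G.adjMatrix ℝ + 2).submatrix f f).det := by
  by_cases surj : Function.Surjective f
  · exact (det_submatrix_equiv_self (.ofBijective f ⟨f.injective, surj⟩) _).ge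
  obtain ⟨i, v, hv, hadj⟩ := exists_adj_notMem_range hconn surj
  let g : ι ⊕ Unit ↪ V := ⟨Sum.elim f fun _ ↦ v,
    f.injective.sumElim (Function.injective_of_subsingleton _) fun j _ h ↦ hv ⟨j, h⟩⟩
  have g_eq := submatrix_adjMatrix_add_two_eq_borderTwo (G := G) f hv
  have border_pos : (borderTwo ((G.adjMatrix ℝ + 2).submatrix f f)
      fun i ↦ G.adjMatrix ℝ (f i) v).PosDef := g_eq ▸ hpos.submatrix g.injective
  have integral (j : ι) : ∃ k : ℤ, G.adjMatrix ℝ (f j) v = k :=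
    ⟨G.adjMatrix ℤ (f j) v, by simp [adjMatrix_apply]⟩
  have ne_zero : (fun i ↦ G.adjMatrix ℝ (f i) v) ≠ 0 := fun h ↦ by
    simpa [hadj] using congrFun h i
  calc (G.adjMatrix ℝ + 2).det
      ≤ ((G.adjMatrix ℝ + 2).submatrix g g).det :=
        det_adjMatrix_add_two_le hconn hpos g
          (g_eq ▸ hf.borderTwo border_pos integral ne_zero)
    _ ≤ ((G.adjMatrix ℝ + 2).submatrix f f).det :=
        g_eq ▸ det_borderTwo_le border_pos hf integral ne_zero
termination_by Fintype.card V - Fintype.card ι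
decreasing_by
  have card_lt := Fintype.card_lt_of_injective_not_surjective f f.injective surj
  rw [Fintype.card_sum, Fintype.card_unit]
  omega

theorem dvd_det_of_mulVec_one_eq {ι R : Type*} [Fintype ι] [DecidableEq ι] [CommRing R] [Nonempty ι]
    {M : Matrix ι ι R} {k : R} (h : M *ᵥ 1 = fun _ ↦ k) : k ∣ M.det := by
  have key : M.det • (1 : ι → R) = k • (M.adjugate *ᵥ 1) := by
    rw [← one_mulVec (1 : ι → R), ← smul_mulVec, ← adjugate_mul, ← mulVec_mulVec, h]
    ext i
    simp [mulVec, dotProduct, Finset.mul_sum, mul_comm]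
  exact ⟨_, by simpa using congrFun key (Classical.arbitrary ι)⟩

theorem degree_add_two_le_det [Nonempty V] {d : ℕ} (hreg : G.IsRegularOfDegree d)
    (hpos : (G.adjMatrix ℝ + 2).PosDef) : (d : ℝ) + 2 ≤ (G.adjMatrix ℝ + 2).det := by
  have cast_det : (G.adjMatrix ℝ + 2).det = ((G.adjMatrix ℤ + 2).det : ℝ) := by
    rw [Int.cast_det]
    congr 1
    ext i j
    rcases eq_or_ne i j with rfl | hij
    · simp [Matrix.ofNat_apply]
    · simp [Matrix.ofNat_apply, hij, adjMatrix_apply]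
  have row_sum : (G.adjMatrix ℤ + 2) *ᵥ 1 = fun _ ↦ (d + 2 : ℤ) := by
    ext v
    simp [add_mulVec, hreg v]
  have det_pos : 0 < (G.adjMatrix ℤ + 2).det := by
    have := hpos.det_pos
    rw [cast_det] at this
    exact_mod_cast this
  rw [cast_det]
  exact_mod_cast Int.le_of_dvd det_pos (dvd_det_of_mulVec_one_eq row_sum)

end Growth

section CycleGram

variable {n : ℕ}

/-- The edge-vertex incidence matrix of the cycle of length `n + 3`, with row `i` standing for the
edge from `i` to `i + 1`. -/
def cycleIncMatrix (n : ℕ) : Matrix (Fin (n + 3)) (Fin (n + 3)) ℝ :=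
  1 + (1 : Matrix (Fin (n + 3)) (Fin (n + 3)) ℝ).submatrix (· + 1) id

theorem cycleIncMatrix_apply (i j : Fin (n + 3)) :
    cycleIncMatrix n i j = (if i = j then 1 else 0) + if i + 1 = j then 1 else 0 := by
  simp [cycleIncMatrix, Matrix.one_apply]

theorem cycleIncMatrix_mulVec (v : Fin (n + 3) → ℝ) (i : Fin (n + 3)) :
    (cycleIncMatrix n *ᵥ v) i = v i + v (i + 1) := by
  simp [mulVec, dotProduct, cycleIncMatrix_apply, add_mul, Finset.sum_add_distrib]

theorem cycleIncMatrix_mul_transpose :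
    cycleIncMatrix n * (cycleIncMatrix n)ᵀ = (cycleGraph (n + 3)).adjMatrix ℝ + 2 := by
  ext i j
  have entry : (cycleIncMatrix n * (cycleIncMatrix n)ᵀ) i j =
      cycleIncMatrix n j i + cycleIncMatrix n j (i + 1) := cycleIncMatrix_mulVec _ i
  have add_one_add_one_ne (k : Fin (n + 3)) : k + 1 + 1 ≠ k := by
    rw [Ne, add_assoc, add_eq_left, Fin.ext_iff, Fin.val_add]
    simp [Nat.mod_eq_of_lt]
  simp only [entry, Matrix.add_apply, adjMatrix_apply, cycleGraph_adj, Matrix.ofNat_apply,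
    sub_eq_iff_eq_add', cycleIncMatrix_apply, add_left_inj]
  rcases eq_or_ne i j with rfl | hij
  · simp [one_add_one_eq_two]
  rcases eq_or_ne j (i + 1) with rfl | hj
  · simp [add_one_add_one_ne, hij]
  · simp [hij, hij.symm, hj, eq_comm]

theorem det_submatrix_cycleIncMatrix :
    ((cycleIncMatrix n).submatrix Fin.castSucc Fin.succ).det = 1 := by
  rw [det_of_isLowerTriangular]
  · simp [cycleIncMatrix_apply, Fin.coeSucc_eq_succ, Fin.castSucc_lt_succ.ne]
  · intro i j hij
    have lt : i < j := hij
    have ne : i.castSucc ≠ j.succ := (Fin.castSucc_lt_succ_iff.mpr lt.le).ne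
    simp [cycleIncMatrix_apply, Fin.coeSucc_eq_succ, lt.ne, ne]

theorem cycleIncMatrix_mulVec_alternating :
    (cycleIncMatrix n *ᵥ fun i ↦ (-1) ^ (i : ℕ)) = Pi.single (Fin.last (n + 2)) (1 + (-1) ^ n) := by
  ext i
  rw [cycleIncMatrix_mulVec]
  induction i using Fin.lastCases with
  | last => simp [pow_add, add_comm]
  | cast i => simp [pow_succ]

theorem det_cycleIncMatrix_sq : (cycleIncMatrix n).det ^ 2 = (1 + (-1) ^ n) ^ 2 := by
  have cramer : (cycleIncMatrix n).adjugate *ᵥ (cycleIncMatrix n *ᵥ fun i ↦ (-1) ^ (i : ℕ)) =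
      (cycleIncMatrix n).det • fun i : Fin (n + 3) ↦ (-1) ^ (i : ℕ) := by
    rw [mulVec_mulVec, adjugate_mul, smul_mulVec, one_mulVec]
  have det_eq := congrFun cramer 0
  rw [cycleIncMatrix_mulVec_alternating] at det_eq
  simp only [mulVec_single, adjugate_fin_succ_eq_det_submatrix, Fin.succAbove_last,
    Fin.succAbove_zero, det_submatrix_cycleIncMatrix, Pi.smul_apply, op_smul_eq_smul, smul_eq_mul,
    col_apply, Fin.val_zero, Fin.val_last, pow_zero, mul_one] at det_eq
  rw [← det_eq, mul_pow, ← pow_mul, mul_comm (n + 2 + 0), pow_mul, neg_one_sq, one_pow, mul_one]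

theorem det_adjMatrix_cycleGraph_add_two :
    ((cycleGraph (n + 3)).adjMatrix ℝ + 2).det = (1 + (-1) ^ n) ^ 2 := by
  rw [← cycleIncMatrix_mul_transpose, det_mul, det_transpose, ← sq, det_cycleIncMatrix_sq]

theorem exists_eq_alternating_add_int {v : Fin (n + 3) → ℝ}
    (hv : ∀ i, ∃ k : ℤ, v i + v (i + 1) = k) (i : Fin (n + 3)) :
    ∃ k : ℤ, v i = (-1) ^ (i : ℕ) * v 0 + k := by
  induction i using Fin.induction with
  | zero => exact ⟨0, by simp⟩
  | succ i ih =>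
    obtain ⟨k, hk⟩ := ih
    obtain ⟨m, hm⟩ := hv i.castSucc
    refine ⟨m - k, ?_⟩
    rw [Fin.coeSucc_eq_succ] at hm
    rw [Fin.val_castSucc] at hk
    rw [Fin.val_succ, pow_succ]
    push_cast
    linarith

theorem exists_two_mul_eq_int_add_two_mul_int (hn : Even n) {v : Fin (n + 3) → ℝ}
    (hv : ∀ i, ∃ k : ℤ, v i + v (i + 1) = k) : ∃ m : ℤ, ∀ i, ∃ k : ℤ, 2 * v i = m + 2 * k := by
  obtain ⟨m, hm⟩ : ∃ m : ℤ, 2 * v 0 = m := by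
    obtain ⟨k, hk⟩ := exists_eq_alternating_add_int hv (Fin.last (n + 2))
    obtain ⟨k', hk'⟩ := hv (Fin.last (n + 2))
    rw [Fin.last_add_one] at hk'
    rw [Fin.val_last, (hn.add even_two).neg_one_pow] at hk
    exact ⟨k' - k, by push_cast; linarith⟩
  refine ⟨m, fun i ↦ ?_⟩
  obtain ⟨k, hk⟩ := exists_eq_alternating_add_int hv i
  rcases neg_one_pow_eq_or ℝ (i : ℕ) with sign | sign
  · exact ⟨k, by rw [hk, sign]; linarith⟩
  · exact ⟨k - m, by rw [hk, sign]; push_cast; linarith⟩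

theorem one_le_dotProduct_self {ι : Type*} [Fintype ι] (hcard : 4 ≤ Fintype.card ι) {v : ι → ℝ}
    (hv₀ : v ≠ 0) {m : ℤ} (hv : ∀ i, ∃ k : ℤ, 2 * v i = m + 2 * k) : 1 ≤ v ⬝ᵥ v := by
  have one_le_int_sq {k : ℤ} (hk : k ≠ 0) : (1 : ℝ) ≤ (k : ℝ) ^ 2 := by
    exact_mod_cast (one_le_sq_iff_one_le_abs k).mpr (Int.one_le_abs hk)
  simp only [dotProduct, ← sq]
  rcases Int.even_or_odd' m with ⟨c, rfl | rfl⟩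
  · obtain ⟨i, hi⟩ := Function.ne_iff.mp hv₀
    obtain ⟨k, hk⟩ := hv i
    have v_eq : v i = (c + k : ℤ) := by push_cast at hk ⊢; linarith
    have int_ne : c + k ≠ 0 := fun h ↦ hi (by simp [v_eq, h])
    calc 1 ≤ v i ^ 2 := v_eq ▸ one_le_int_sq int_ne
      _ ≤ ∑ j, v j ^ 2 := Finset.single_le_sum (fun j _ ↦ sq_nonneg (v j)) (Finset.mem_univ i)
  · have quarter_le (i : ι) : 1 / 4 ≤ v i ^ 2 := by
      obtain ⟨k, hk⟩ := hv i
      have v_eq : 2 * v i = (2 * c + 1 + 2 * k : ℤ) := by exact_mod_cast hk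
      have := one_le_int_sq (k := 2 * c + 1 + 2 * k) (by omega)
      rw [← v_eq] at this
      linarith
    calc (1 : ℝ) ≤ Fintype.card ι * (1 / 4) := by
          have : (4 : ℝ) ≤ Fintype.card ι := by exact_mod_cast hcard
          linarith
      _ = ∑ _ : ι, (1 / 4 : ℝ) := by simp
      _ ≤ ∑ j, v j ^ 2 := Finset.sum_le_sum fun j _ ↦ quarter_le j

theorem dualNormSqGeOne_cycleGraph (hn : Even n) (hn₀ : n ≠ 0) :
    DualNormSqGeOne ((cycleGraph (n + 3)).adjMatrix ℝ + 2) := by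
  intro y hy hint
  have mulVec_ne : ((cycleGraph (n + 3)).adjMatrix ℝ + 2) *ᵥ y ≠ 0 := fun h ↦
    hy (eq_zero_of_mulVec_eq_zero (by
      rw [det_adjMatrix_cycleGraph_add_two, hn.neg_one_pow]; norm_num) h)
  rw [← cycleIncMatrix_mul_transpose, ← mulVec_mulVec] at hint mulVec_ne ⊢
  have form_eq : y ⬝ᵥ cycleIncMatrix n *ᵥ (cycleIncMatrix n)ᵀ *ᵥ y =
      ((cycleIncMatrix n)ᵀ *ᵥ y) ⬝ᵥ ((cycleIncMatrix n)ᵀ *ᵥ y) := by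
    rw [dotProduct_mulVec, mulVec_transpose]
  obtain ⟨m, hm⟩ := exists_two_mul_eq_int_add_two_mul_int hn
    (by simpa only [cycleIncMatrix_mulVec] using hint)
  rw [form_eq]
  exact one_le_dotProduct_self (by simp; omega) (fun h ↦ mulVec_ne (by rw [h, mulVec_zero])) hm

end CycleGram

section InducedCycleDegree

variable {V : Type*} [DecidableEq V] {G : SimpleGraph V} [DecidableRel G.Adj]

theorem submatrix_adjMatrix_add_two {W : Type*} [DecidableEq W] {H : SimpleGraph W}
    [DecidableRel H.Adj] (φ : H ↪g G) :
    (G.adjMatrix ℝ + 2).submatrix φ φ = H.adjMatrix ℝ + 2 := by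
  ext i j
  simp [adjMatrix_apply, Matrix.ofNat_apply, φ.injective.eq_iff]

variable {n : ℕ}

theorem even_of_cycleGraph_embedding (hpos : (G.adjMatrix ℝ + 2).PosDef)
    (φ : cycleGraph (n + 3) ↪g G) : Even n := by
  by_contra hodd
  have det_pos := (hpos.submatrix φ.injective).det_pos
  rw [submatrix_adjMatrix_add_two, det_adjMatrix_cycleGraph_add_two,
    (Nat.not_even_iff_odd.mp hodd).neg_one_pow] at det_pos
  norm_num at det_pos

theorem degree_le_two_of_cycleGraph_embedding [Fintype V] (hconn : G.Preconnected)
    (hpos : (G.adjMatrix ℝ + 2).PosDef) (hn₀ : n ≠ 0) (φ : cycleGraph (n + 3) ↪g G) {d : ℕ}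
    (hreg : G.IsRegularOfDegree d) : d ≤ 2 := by
  have hn := even_of_cycleGraph_embedding hpos φ
  have : Nonempty V := ⟨φ 0⟩
  have gram_eq := submatrix_adjMatrix_add_two φ
  have : (d : ℝ) + 2 ≤ 4 :=
    calc (d : ℝ) + 2 ≤ (G.adjMatrix ℝ + 2).det := degree_add_two_le_det hreg hpos
      _ ≤ ((cycleGraph (n + 3)).adjMatrix ℝ + 2).det :=
        gram_eq ▸ det_adjMatrix_add_two_le hconn hpos φ.toEmbedding
          (gram_eq ▸ dualNormSqGeOne_cycleGraph hn hn₀)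
      _ = 4 := by rw [det_adjMatrix_cycleGraph_add_two, hn.neg_one_pow]; norm_num
  exact_mod_cast (by linarith : (d : ℝ) ≤ 2)

end InducedCycleDegree

section InducedCycle

variable {V : Type*} {G : SimpleGraph V}

theorem exists_pathGraph_embedding (hconn : G.Connected) (u v : V) :
    ∃ φ : pathGraph (G.dist u v + 1) ↪g G, φ 0 = u ∧ φ (Fin.last _) = v := by
  obtain ⟨w, hw⟩ := hconn.exists_walk_length_eq_dist u v
  have dist_getVert {i : ℕ} (hi : i ≤ w.length) : G.dist u (w.getVert i) = i := by
    have initial := dist_le (w.take i)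
    have final := dist_le (w.drop i)
    have triangle := hconn.dist_triangle (u := u) (v := w.getVert i) (w := v)
    rw [Walk.take_length] at initial
    rw [Walk.drop_length] at final
    omega
  have injective : Function.Injective fun i : Fin (G.dist u v + 1) ↦ w.getVert i := fun i j hij ↦ by
    have dist_eq : G.dist u (w.getVert i) = G.dist u (w.getVert j) := congrArg _ hij
    rw [dist_getVert (by omega), dist_getVert (by omega)] at dist_eq
    exact Fin.ext dist_eq
  have adj_iff (i j : Fin (G.dist u v + 1)) :
      G.Adj (w.getVert i) (w.getVert j) ↔ (pathGraph (G.dist u v + 1)).Adj i j := by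
    rw [pathGraph_adj]
    refine ⟨fun hadj ↦ ?_, ?_⟩
    · have dist_diff := hadj.diff_dist_adj (u := u)
      have ne : (i : ℕ) ≠ j := fun h ↦ hadj.ne (congrArg w.getVert h)
      rw [dist_getVert (by omega), dist_getVert (by omega)] at dist_diff
      omega
    · rintro (h | h) <;> rw [← h]
      · exact w.adj_getVert_succ (by omega)
      · exact (w.adj_getVert_succ (by omega)).symm
  exact ⟨⟨⟨_, injective⟩, adj_iff _ _⟩, w.getVert_zero, w.getVert_of_length_le hw.le⟩

theorem cycleGraph_adj_castSucc {p : ℕ} {i j : Fin (p + 1)} :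
    (cycleGraph (p + 2)).Adj i.castSucc j.castSucc ↔ (pathGraph (p + 1)).Adj i j := by
  rw [cycleGraph_adj, pathGraph_adj, sub_eq_iff_eq_add', sub_eq_iff_eq_add',
    Fin.coeSucc_eq_succ, Fin.coeSucc_eq_succ]
  simp only [Fin.ext_iff, Fin.val_castSucc, Fin.val_succ]
  omega

theorem cycleGraph_adj_last_castSucc {p : ℕ} {j : Fin (p + 1)} :
    (cycleGraph (p + 2)).Adj (Fin.last _) j.castSucc ↔ j = 0 ∨ j = Fin.last p := by
  rw [cycleGraph_adj, sub_eq_iff_eq_add', sub_eq_iff_eq_add',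
    Fin.coeSucc_eq_succ, Fin.last_add_one]
  simp only [Fin.ext_iff, Fin.val_castSucc, Fin.val_succ, Fin.val_last, Fin.val_zero]
  omega

theorem nonempty_cycleGraph_embedding {p : ℕ} (φ : pathGraph (p + 1) ↪g G) {a : V}
    (ha : a ∉ Set.range φ) (hadj : ∀ i, G.Adj a (φ i) ↔ i = 0 ∨ i = Fin.last p) :
    Nonempty (cycleGraph (p + 2) ↪g G) := by
  refine ⟨⟨⟨Fin.snoc (α := fun _ ↦ V) φ a, Fin.snoc_injective_iff.mpr ⟨φ.injective, ha⟩⟩, ?_⟩⟩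
  intro i j
  induction i using Fin.lastCases <;> induction j using Fin.lastCases <;>
    simp [cycleGraph_adj_castSucc, cycleGraph_adj_last_castSucc, hadj, adj_comm _ _ a,
      adj_comm _ _ (Fin.last _)]

/-- The vertex `a` is at distance at least two from the set `B`, i.e. outside its closed
neighbourhood. -/
structure IsRemote (G : SimpleGraph V) (B : Set V) (a : V) : Prop where
  notMem : a ∉ B
  not_adj : ∀ b ∈ B, ¬G.Adj b a

theorem exists_adj_of_not_isRemote {B : Set V} {u : V} (hu : u ∉ B) (h : ¬IsRemote G B u) :
    ∃ b ∈ B, G.Adj b u := by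
  by_contra! not_adj
  exact h ⟨hu, not_adj⟩

theorem induce_insert_connected {B : Set V} (hB : (G.induce B).Connected) {b u : V} (hb : b ∈ B)
    (hadj : G.Adj b u) : (G.induce (insert u B)).Connected := by
  rw [Set.insert_eq, Set.union_comm]
  exact connected_induce_union hB.preconnected .of_subsingleton hb rfl hadj

theorem exists_connected_forall_isRemote_adj [Finite V] (hG : G ≠ ⊤) :
    ∃ B : Set V, (G.induce B).Connected ∧ (∃ a, IsRemote G B a) ∧
      ∀ u ∉ B, ¬IsRemote G B u → ∀ a, IsRemote G B a → G.Adj u a := by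
  obtain ⟨v, w, hne, hnadj⟩ := ne_top_iff_exists_not_adj.mp hG
  obtain ⟨B, -, ⟨hB, hremote⟩, maximal⟩ :=
    (Set.toFinite {B : Set V | (G.induce B).Connected ∧ ∃ a, IsRemote G B a}).exists_le_maximal
      (a := {v}) ⟨⟨.of_subsingleton⟩, w, hne.symm, by simpa using hnadj⟩
  refine ⟨B, hB, hremote, fun u hu hu' a ha ↦ ?_⟩
  obtain ⟨b, hb, hbu⟩ := exists_adj_of_not_isRemote hu hu'
  by_contra hua
  have ne : a ≠ u := fun h ↦ ha.not_adj b hb (h ▸ hbu)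
  have insert_remote : IsRemote G (insert u B) a :=
    ⟨by simp [ne, ha.notMem], by simpa [hua] using ha.not_adj⟩
  exact hu (maximal ⟨induce_insert_connected hB hb hbu, a, insert_remote⟩ (Set.subset_insert u B)
    (Set.mem_insert u B))

theorem exists_not_adj_of_isRegularOfDegree [G.LocallyFinite] (hconn : G.Preconnected) {d : ℕ}
    (hreg : G.IsRegularOfDegree d) {B : Set V} (hB : B.Nonempty) {a : V} (ha : IsRemote G B a)
    (hadj : ∀ u ∉ B, ¬IsRemote G B u → ∀ a, IsRemote G B a → G.Adj u a) :
    ∃ u ∉ B, ∃ v ∉ B, ¬IsRemote G B u ∧ ¬IsRemote G B v ∧ u ≠ v ∧ ¬G.Adj u v := by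
  classical
  by_contra! clique
  obtain ⟨b₀, hb₀⟩ := hB
  obtain ⟨walk⟩ := hconn b₀ a
  obtain ⟨⟨⟨b, u⟩, hbu⟩, -, hb, hu⟩ := walk.exists_boundary_dart B hb₀ ha.notMem
  have hu' : ¬IsRemote G B u := fun h ↦ h.not_adj b hb hbu
  have hua := hadj u hu hu' a ha
  have hba : b ≠ a := fun h ↦ ha.notMem (h ▸ hb)
  have hab : ¬G.Adj a b := fun h ↦ ha.not_adj b hb h.symm
  have subset : insert b (insert a ((G.neighborFinset a).erase u)) ⊆ G.neighborFinset u := by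
    simp only [Finset.insert_subset_iff, mem_neighborFinset, hbu.symm, hua, true_and]
    intro v hv
    simp only [Finset.mem_erase, mem_neighborFinset] at hv ⊢
    by_cases hvB : v ∈ B
    · exact absurd hv.2.symm (ha.not_adj v hvB)
    by_cases hvr : IsRemote G B v
    · exact hadj u hu hu' v hvr
    · exact clique u hu v hvB hu' hvr hv.1.symm
  have card_le := Finset.card_le_card subset
  rw [Finset.card_insert_of_notMem (by simp [hba, hab]), Finset.card_insert_of_notMem (by simp),
    Finset.card_erase_of_mem (by simpa using hua.symm), card_neighborFinset_eq_degree,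
    card_neighborFinset_eq_degree, hreg.degree_eq, hreg.degree_eq] at card_le
  omega

theorem exists_cycleGraph_embedding_of_isRemote {B : Set V} (hB : (G.induce B).Connected)
    {a u v : V} (ha : IsRemote G B a) (hu : ∃ b ∈ B, G.Adj b u) (hv : ∃ b ∈ B, G.Adj b v)
    (hau : G.Adj a u) (hav : G.Adj a v) (hne : u ≠ v) (huv : ¬G.Adj u v) :
    ∃ n ≠ 0, Nonempty (cycleGraph (n + 3) ↪g G) := by
  obtain ⟨b, hb, hbu⟩ := hu
  obtain ⟨c, hc, hcv⟩ := hv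
  let C : Set V := insert v (insert u B)
  have hC : (G.induce C).Connected :=
    induce_insert_connected (induce_insert_connected hB hb hbu) (Set.mem_insert_of_mem u hc) hcv
  let u' : C := ⟨u, by simp [C]⟩
  let v' : C := ⟨v, by simp [C]⟩
  obtain ⟨φ, hφ₀, hφ_last⟩ := exists_pathGraph_embedding hC u' v'
  have one_lt_dist : 1 < (G.induce C).dist u' v' :=
    hC.one_lt_dist_of_ne_of_not_adj (by simpa [u', v']) (by simpa [u', v'])
  have haC : a ∉ C := by simp [C, hau.ne, hav.ne, ha.notMem]
  have adj_iff (i : Fin ((G.induce C).dist u' v' + 1)) :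
      G.Adj a (φ i) ↔ i = 0 ∨ i = Fin.last _ := by
    have eq_zero_iff : i = 0 ↔ (φ i : V) = u := by
      rw [← φ.injective.eq_iff, hφ₀, Subtype.ext_iff]
    have eq_last_iff : i = Fin.last _ ↔ (φ i : V) = v := by
      rw [← φ.injective.eq_iff, hφ_last, Subtype.ext_iff]
    rw [eq_zero_iff, eq_last_iff]
    refine ⟨fun h ↦ ?_, ?_⟩
    · rcases (φ i).2 with hi | hi | hi
      · exact .inr hi
      · exact .inl hi
      · exact absurd h.symm (ha.not_adj _ hi)
    · rintro (h | h) <;> rwa [h]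
  have cycle := nonempty_cycleGraph_embedding ((Embedding.induce C).comp φ)
    (by rintro ⟨i, rfl⟩; exact haC (φ i).2) adj_iff
  rw [show (G.induce C).dist u' v' + 2 = (G.induce C).dist u' v' - 1 + 3 by omega] at cycle
  exact ⟨_, by omega, cycle⟩

theorem exists_cycleGraph_embedding [Fintype V] [DecidableRel G.Adj] (hconn : G.Preconnected)
    (hG : G ≠ ⊤) {d : ℕ} (hreg : G.IsRegularOfDegree d) :
    ∃ n ≠ 0, Nonempty (cycleGraph (n + 3) ↪g G) := by
  obtain ⟨B, hB, ⟨a, ha⟩, hadj⟩ := exists_connected_forall_isRemote_adj hG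
  obtain ⟨u, hu, v, hv, hu', hv', hne, huv⟩ :=
    exists_not_adj_of_isRegularOfDegree hconn hreg (Set.nonempty_coe_sort.mp hB.nonempty) ha hadj
  exact exists_cycleGraph_embedding_of_isRemote hB ha (exists_adj_of_not_isRemote hu hu')
    (exists_adj_of_not_isRemote hv hv') (hadj u hu hu' a ha).symm (hadj v hv hv' a ha).symm hne huv

end InducedCycle

section InducedSubgraphBounds

theorem extend_dotProduct {W V : Type*} [Fintype W] [Fintype V] {φ : W → V}
    (hφ : Function.Injective φ) (g : W → ℝ) (h : V → ℝ) :
    Function.extend φ g 0 ⬝ᵥ h = g ⬝ᵥ (h ∘ φ) := by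
  refine (Fintype.sum_of_injective φ hφ _ _ (fun v hv ↦ ?_) fun i ↦ ?_).symm
  · rw [Function.extend_apply' _ _ _ hv, Pi.zero_apply, zero_mul]
  · rw [hφ.extend_apply, Function.comp_apply]

variable {V W : Type*} [Fintype V] [Fintype W] {G : SimpleGraph V} {H : SimpleGraph W}
  [DecidableRel G.Adj] [DecidableRel H.Adj]

theorem extend_dotProduct_adjMatrix_mulVec (φ : H ↪g G) (g : W → ℝ) :
    Function.extend φ g 0 ⬝ᵥ G.adjMatrix ℝ *ᵥ Function.extend φ g 0 =
      g ⬝ᵥ H.adjMatrix ℝ *ᵥ g := by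
  rw [extend_dotProduct φ.injective]
  congr 1
  ext i
  rw [Function.comp_apply, mulVec, dotProduct_comm, extend_dotProduct φ.injective, dotProduct_comm,
    mulVec]
  congr 1
  ext j
  simp [adjMatrix_apply]

variable [DecidableEq V] {d : ℕ}

theorem dotProduct_lapMatrix_mulVec_of_isRegularOfDegree (hreg : G.IsRegularOfDegree d)
    (f : V → ℝ) : f ⬝ᵥ G.lapMatrix ℝ *ᵥ f = d * (f ⬝ᵥ f) - f ⬝ᵥ G.adjMatrix ℝ *ᵥ f := by
  have degMatrix_eq : G.degMatrix ℝ = (d : ℝ) • 1 := by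
    simp [degMatrix, hreg.degree_eq, smul_one_eq_diagonal]
  rw [lapMatrix, degMatrix_eq, sub_mulVec, smul_mulVec, one_mulVec, dotProduct_sub,
    dotProduct_smul, smul_eq_mul]

variable {n : ℕ} {μ : Fin n → ℝ}

theorem IsLapSpectrum.le_last_mul_of_embedding (hμ : IsLapSpectrum G μ) (hn : 2 ≤ n)
    (hreg : G.IsRegularOfDegree d) (φ : H ↪g G) (g : W → ℝ) :
    d * (g ⬝ᵥ g) - g ⬝ᵥ H.adjMatrix ℝ *ᵥ g ≤ μ ⟨n - 1, by omega⟩ * (g ⬝ᵥ g) := by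
  have bound := hμ.dotProduct_lapMatrix_mulVec_le hn (Function.extend φ g 0)
  rwa [dotProduct_lapMatrix_mulVec_of_isRegularOfDegree hreg, extend_dotProduct_adjMatrix_mulVec,
    extend_dotProduct φ.injective, Function.extend_comp φ.injective] at bound

theorem IsLapSpectrum.second_mul_le_of_embedding (hμ : IsLapSpectrum G μ) (hn : 2 ≤ n)
    (hreg : G.IsRegularOfDegree d) (φ : H ↪g G) {g : W → ℝ} (hg : ∑ i, g i = 0) :
    μ ⟨1, by omega⟩ * (g ⬝ᵥ g) ≤ d * (g ⬝ᵥ g) - g ⬝ᵥ H.adjMatrix ℝ *ᵥ g := by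
  have sum_extend : ∑ v, Function.extend φ g 0 v = 0 := by
    rw [← dotProduct_one, extend_dotProduct φ.injective, Pi.one_comp, dotProduct_one, hg]
  have bound := hμ.mul_dotProduct_le hn sum_extend
  rwa [dotProduct_lapMatrix_mulVec_of_isRegularOfDegree hreg, extend_dotProduct_adjMatrix_mulVec,
    extend_dotProduct φ.injective, Function.extend_comp φ.injective] at bound

theorem pathGraph_four_dotProduct_adjMatrix_mulVec [DecidableRel (pathGraph 4).Adj]
    (a b c d : ℝ) : ![a, b, c, d] ⬝ᵥ (pathGraph 4).adjMatrix ℝ *ᵥ ![a, b, c, d] =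
      2 * (a * b + b * c + c * d) := by
  have mulVec_eq : (pathGraph 4).adjMatrix ℝ *ᵥ ![a, b, c, d] = ![b, a + c, b + d, c] := by
    ext i
    fin_cases i <;>
      simp [mulVec, dotProduct, Fin.sum_univ_four, adjMatrix_apply, pathGraph_adj]
  rw [mulVec_eq]
  simp only [cons_dotProduct_cons, dotProduct_of_isEmpty]
  ring

theorem IsLapSpectrum.degree_add_le_last_of_pathGraph_four (hμ : IsLapSpectrum G μ) (hn : 2 ≤ n)
    (hreg : G.IsRegularOfDegree d) (φ : pathGraph 4 ↪g G) :
    (d : ℝ) + 8 / 5 ≤ μ ⟨n - 1, by omega⟩ := by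
  classical
  have bound := hμ.le_last_mul_of_embedding hn hreg φ ![1, -2, 2, -1]
  rw [pathGraph_four_dotProduct_adjMatrix_mulVec,
    show ![(1 : ℝ), -2, 2, -1] ⬝ᵥ ![1, -2, 2, -1] = 10 by
      norm_num [cons_dotProduct_cons]] at bound
  linarith

theorem IsLapSpectrum.second_le_of_pathGraph_four (hμ : IsLapSpectrum G μ) (hn : 2 ≤ n)
    (hreg : G.IsRegularOfDegree d) (φ : pathGraph 4 ↪g G) :
    μ ⟨1, by omega⟩ ≤ d - 3 / 5 := by
  classical
  have bound := hμ.second_mul_le_of_embedding hn hreg φ (g := ![2, 1, -1, -2])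
    (by simp [Fin.sum_univ_four])
  rw [pathGraph_four_dotProduct_adjMatrix_mulVec,
    show ![(2 : ℝ), 1, -1, -2] ⬝ᵥ ![2, 1, -1, -2] = 10 by
      norm_num [cons_dotProduct_cons]] at bound
  linarith

end InducedSubgraphBounds

section SpanningCycle

variable {V : Type*} {G : SimpleGraph V} {n : ℕ}

theorem surjective_of_cycleGraph_embedding [G.LocallyFinite] (hconn : G.Preconnected)
    (hdeg : ∀ v, G.degree v ≤ 2) (φ : cycleGraph (n + 3) ↪g G) : Function.Surjective φ := by
  by_contra hφ
  obtain ⟨i, v, hv, hadj⟩ := exists_adj_notMem_range hconn hφ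
  have subset : ((cycleGraph (n + 3)).neighborFinset i).map φ.toEmbedding ⊂
      G.neighborFinset (φ i) := by
    refine Finset.ssubset_iff_subset_ne.mpr ⟨fun w hw ↦ ?_, fun h ↦ ?_⟩
    · obtain ⟨j, hj, rfl⟩ := Finset.mem_map.mp hw
      simpa using hj
    · have hv' : v ∈ G.neighborFinset (φ i) := by simpa using hadj
      obtain ⟨j, -, hj⟩ := Finset.mem_map.mp (h ▸ hv')
      exact hv ⟨j, hj⟩
  have card_lt := Finset.card_lt_card subset
  rw [Finset.card_map, card_neighborFinset_eq_degree, card_neighborFinset_eq_degree,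
    cycleGraph_degree_three_le] at card_lt
  exact (hdeg (φ i)).not_gt card_lt

theorem nonempty_pathGraph_four_embedding (hn : 2 ≤ n) (φ : cycleGraph (n + 3) ↪g G) :
    Nonempty (pathGraph 4 ↪g G) := by
  refine ⟨φ.comp ⟨⟨fun i ↦ (Fin.castLE (by omega : 4 ≤ n + 2) i).castSucc, fun i j hij ↦ ?_⟩, ?_⟩⟩
  · simpa using hij
  · exact cycleGraph_adj_castSucc.trans (by simp [pathGraph_adj])

theorem Separates.card_ne_one {S : Finset V} {A : Set V} (h : Separates G S A)
    {φ : cycleGraph (n + 3) ↪g G} (hφ : Function.Surjective φ) : S.card ≠ 1 := by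
  intro card_eq
  obtain ⟨s, rfl⟩ := Finset.card_eq_one.mp card_eq
  obtain ⟨i, rfl⟩ := hφ s
  have exists_eq {v : V} (hv : v ≠ φ i) : ∃ k : Fin (n + 2), v = φ (i + k.succ) := by
    obtain ⟨j, rfl⟩ := hφ v
    obtain ⟨k, hk⟩ := Fin.exists_succ_eq.mpr (sub_ne_zero.mpr fun h ↦ hv (congrArg φ h))
    exact ⟨k, by rw [hk, add_sub_cancel]⟩
  have notMem (k : Fin (n + 2)) : φ (i + k.succ) ∉ ({φ i} : Finset V) := by
    simp [φ.injective.eq_iff, Fin.succ_ne_zero]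
  have mem_iff (k : Fin (n + 2)) : φ (i + k.succ) ∈ A ↔ φ (i + 1) ∈ A := by
    induction k using Fin.induction with
    | zero => simp
    | succ k ih =>
      refine (h.mem_iff_of_adj (φ.map_adj_iff.mpr ?_) (notMem _) (notMem _)).trans ih
      rw [cycleGraph_adj, Fin.succ_castSucc, ← Fin.coeSucc_eq_succ (a := k.succ)]
      left
      abel
  obtain ⟨u, hu⟩ := h.nonempty
  obtain ⟨v, hvA, hvS⟩ := h.exists_notMem
  obtain ⟨j, rfl⟩ := exists_eq (v := u) fun hui ↦ Set.disjoint_left.mp h.disjoint hu (by simp [hui])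
  obtain ⟨k, rfl⟩ := exists_eq (by simpa using hvS)
  exact hvA ((mem_iff k).mpr ((mem_iff j).mp hu))

end SpanningCycle

section NarrowSpectrum

variable {V : Type*} [Fintype V] [DecidableEq V] {G : SimpleGraph V} [DecidableRel G.Adj] {n : ℕ}
  {μ : Fin n → ℝ}

theorem IsLapSpectrum.isRegularOfDegree_minDegree (hμ : IsLapSpectrum G μ) (hn : 2 ≤ n)
    (hconn : G.Preconnected) (hlt : μ ⟨n - 1, by omega⟩ < G.minDegree + 2) :
    G.IsRegularOfDegree G.minDegree := by
  intro v
  have := hμ.nontrivial hn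
  have degree_le := hμ.degree_add_one_le_last hn (hconn.degree_pos_of_nontrivial v)
  have degree_lt : (G.degree v : ℝ) < G.minDegree + 1 := by linarith
  exact (Nat.lt_succ_iff.mp (by exact_mod_cast degree_lt)).antisymm (G.minDegree_le_degree v)

theorem IsLapSpectrum.posDef_adjMatrix_add_two (hμ : IsLapSpectrum G μ) (hn : 2 ≤ n) {d : ℕ}
    (hreg : G.IsRegularOfDegree d) (hlt : μ ⟨n - 1, by omega⟩ < d + 2) :
    (G.adjMatrix ℝ + 2).PosDef := by
  refine .of_dotProduct_mulVec_pos ((isHermitian_adjMatrix ℝ G).add (IsSelfAdjoint.ofNat 2))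
    fun f hf ↦ ?_
  have norm_pos : 0 < f ⬝ᵥ f := by simpa using dotProduct_star_self_pos_iff.mpr hf
  have bound := hμ.dotProduct_lapMatrix_mulVec_le hn f
  rw [dotProduct_lapMatrix_mulVec_of_isRegularOfDegree hreg] at bound
  have form_eq : f ⬝ᵥ (G.adjMatrix ℝ + 2) *ᵥ f = f ⬝ᵥ G.adjMatrix ℝ *ᵥ f + 2 * (f ⬝ᵥ f) := by
    rw [add_mulVec, ofNat_mulVec, dotProduct_add, dotProduct_smul, smul_eq_mul]
  rw [star_trivial, form_eq]
  nlinarith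

theorem Separates.two_le_card_and_second_le {S : Finset V} {A : Set V} (h : Separates G S A)
    (hμ : IsLapSpectrum G μ) (hn : 2 ≤ n) (hpos : 0 < μ ⟨1, by omega⟩)
    (hlt : μ ⟨n - 1, by omega⟩ < G.minDegree + 2) :
    2 ≤ S.card ∧ μ ⟨1, by omega⟩ ≤ μ ⟨n - 1, by omega⟩ - G.minDegree := by
  have hconn := hμ.preconnected hn hpos
  have hreg := hμ.isRegularOfDegree_minDegree hn hconn hlt
  have hgram := hμ.posDef_adjMatrix_add_two hn hreg hlt
  obtain ⟨k, hk₀, ⟨φ⟩⟩ := exists_cycleGraph_embedding hconn h.ne_top hreg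
  have hdeg := degree_le_two_of_cycleGraph_embedding hconn hgram hk₀ φ hreg
  have hsurj := surjective_of_cycleGraph_embedding hconn (fun v ↦ (hreg v).trans_le hdeg) φ
  have card_pos : 0 < S.card := by exact_mod_cast hpos.trans_le (h.second_le_card hμ hn)
  have card_ne_one := h.card_ne_one hsurj
  have two_le : 2 ≤ k := by
    obtain ⟨l, rfl⟩ := even_of_cycleGraph_embedding hgram φ
    omega
  obtain ⟨ψ⟩ := nonempty_pathGraph_four_embedding two_le φ
  have second_le := hμ.second_le_of_pathGraph_four hn hreg ψ
  have le_last := hμ.degree_add_le_last_of_pathGraph_four hn hreg ψ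
  have hdeg' : (G.minDegree : ℝ) ≤ 2 := by exact_mod_cast hdeg
  exact ⟨by omega, by linarith⟩

end NarrowSpectrum

theorem stmt8_general {V : Type*} [Fintype V] [DecidableEq V] (G : SimpleGraph V)
    [DecidableRel G.Adj] {n : ℕ} (hn : 2 ≤ n) {μ : Fin n → ℝ} (hμ : IsLapSpectrum G μ)
    {S : Finset V} (hS : 2 ≤ numComp G S) :
    μ ⟨1, by omega⟩ / (μ ⟨n - 1, by omega⟩ - G.minDegree) ≤ (S.card : ℝ) / 2 := by
  obtain ⟨A, hA⟩ := exists_separates_of_two_le_numComp hS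
  rcases (hμ.nonneg ⟨1, by omega⟩).eq_or_lt with second_eq | second_pos
  · rw [← second_eq, zero_div]
    positivity
  have := hμ.nontrivial hn
  obtain ⟨v, hv⟩ := G.exists_minimal_degree_vertex
  have degree_pos := (hμ.preconnected hn second_pos).degree_pos_of_nontrivial v
  have degree_le := hμ.degree_add_one_le_last hn degree_pos
  rw [← hv] at degree_le
  rw [div_le_div_iff₀ (by linarith) two_pos]
  rcases le_or_gt ((G.minDegree : ℝ) + 2) (μ ⟨n - 1, by omega⟩) with wide | narrow
  · have second_le := hA.second_le_card hμ hn
    nlinarith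
  · obtain ⟨card_ge, second_le⟩ := hA.two_le_card_and_second_le hμ hn second_pos narrow
    have card_ge' : (2 : ℝ) ≤ S.card := by exact_mod_cast card_ge
    nlinarith

theorem stmt8 {n : ℕ} [NeZero n] (hn : 2 ≤ n) (G : SimpleGraph (Fin n)) [DecidableRel G.Adj]
    (hnc : G ≠ ⊤) (μ : Fin n → ℝ) (hμ : IsLapSpectrum G μ)
    (S : Finset (Fin n)) (hdis : numComp G S = 2)
    (hmin : ∀ T : Finset (Fin n), 2 ≤ numComp G T →
      (S.card : ℝ) / numComp G S ≤ (T.card : ℝ) / numComp G T) :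
    μ ⟨1, by omega⟩ / (μ ⟨n - 1, by omega⟩ - G.minDegree) ≤ (S.card : ℝ) / numComp G S := by
  simpa [hdis] using stmt8_general G hn hμ hdis.ge
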